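/- Completeness: Let p, q, r ∈ (0,∞], l ∈ ℕ, α₃ ≥ 0, α₁, α₂ ∈ ℝ, σ₁, σ₂ ∈ (0,∞], and let {t_k} ∈ X^{α₃}_{α,σ,p} be a p-admissible weight sequence. Then the space B̃^l_{p,q,r}(ℝⁿ,{t_k}), with functions identified when equal almost everywhere, is complete with respect to its quasi-norm: every Cauchy sequence in the quasi-norm converges in the quasi-norm to an element of the space. -/

import Mathlib

open MeasureTheory ENNReal Filter
open scoped Classical

noncomputable section

/-- `ℓ_q` quasinorm of a family of extended nonnegative reals (supremum when `q = ∞`). -/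
def lqNorm {ι : Type*} (q : ℝ≥0∞) (c : ι → ℝ≥0∞) : ℝ≥0∞ :=
  if q = ∞ then ⨆ i, c i else (∑' i, c i ^ q.toReal) ^ (1 / q.toReal)

/-- `L_p` quasinorm of an `ℝ≥0∞`-valued function (essential supremum when `p = ∞`). -/
def lpNormE {α : Type*} [MeasurableSpace α] (p : ℝ≥0∞) (μ : Measure α) (f : α → ℝ≥0∞) : ℝ≥0∞ :=
  if p = ∞ then essSup f μ else (∫⁻ x, f x ^ p.toReal ∂μ) ^ (1 / p.toReal)

abbrev Rn (n : ℕ) := Fin n → ℝ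

/-- Open cube centred at `x` of half-side `s` (i.e. `x + s·Iⁿ`). -/
def openCube {n : ℕ} (x : Rn n) (s : ℝ) : Set (Rn n) := {y | ∀ i, |y i - x i| < s}

/-- Open axis-parallel cube with lower corner `c` and side `s`. -/
def cubeAt {n : ℕ} (c : Rn n) (s : ℝ) : Set (Rn n) := {x | ∀ i, c i < x i ∧ x i < c i + s}

/-- Open dyadic cube `Q^n_{k,m}` of side `2^{-k}`. -/
def dyadicCube (n k : ℕ) (m : Fin n → ℤ) : Set (Rn n) :=
  {x | ∀ i, (m i : ℝ) / 2 ^ k < x i ∧ x i < ((m i : ℝ) + 1) / 2 ^ k}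

/-- Half-open dyadic cube `Q̃^n_{k,m}`. -/
def dyadicCubeHalf (n k : ℕ) (m : Fin n → ℤ) : Set (Rn n) :=
  {x | ∀ i, (m i : ℝ) / 2 ^ k ≤ x i ∧ x i < ((m i : ℝ) + 1) / 2 ^ k}

def dyadicCenter (n k : ℕ) (m : Fin n → ℤ) : Rn n := fun i => ((m i : ℝ) + 1 / 2) / 2 ^ k

/-- The concentric dilate `c·Q^n_{k,m}` of a dyadic cube. -/
def dilatedCube (n k : ℕ) (m : Fin n → ℤ) (c : ℝ) : Set (Rn n) :=
  openCube (dyadicCenter n k m) (c / 2 ^ (k + 1))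

def euclNorm {d : ℕ} (y : Rn d) : ℝ := Real.sqrt (∑ i, y i ^ 2)

/-- The difference `Δ^l(h)g(x)`. -/
def diffl {n : ℕ} (l : ℕ) (h : Rn n) (g : Rn n → ℝ) (x : Rn n) : ℝ :=
  ∑ j ∈ Finset.range (l + 1), ((l.choose j : ℝ) * (-1 : ℝ) ^ (l + j)) * g (x + (j : ℝ) • h)

/-- The difference `Δ^l(h,Ω)g(x)`, vanishing unless the segment `[x, x + l·h]` lies in `Ω`. -/
def difflOn {n : ℕ} (l : ℕ) (Ω : Set (Rn n)) (h : Rn n) (g : Rn n → ℝ) (x : Rn n) : ℝ :=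
  if ∀ τ ∈ Set.Icc (0 : ℝ) 1, x + (τ * l) • h ∈ Ω then diffl l h g x else 0

/-- `δ^l_r(Q)g`, where `s` is the side length of the cube `Q`. -/
def deltaE (n l : ℕ) (r : ℝ≥0∞) (s : ℝ) (Q : Set (Rn n)) (g : Rn n → ℝ) : ℝ≥0∞ :=
  ENNReal.ofReal s ^ (-(2 * (n : ℝ)) / r.toReal) *
    eLpNorm (fun hx : Rn n × Rn n => diffl l hx.1 g hx.2) r
      ((volume.restrict (openCube (0 : Rn n) s)).prod (volume.restrict Q))

/-- `δ^l_r(Q,Ω)g`, where `s` is the side length of the cube `Q`. -/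
def deltaEOn (n l : ℕ) (r : ℝ≥0∞) (s : ℝ) (Q Ω : Set (Rn n)) (g : Rn n → ℝ) : ℝ≥0∞ :=
  ENNReal.ofReal s ^ (-(2 * (n : ℝ)) / r.toReal) *
    eLpNorm (fun hx : Rn n × Rn n => difflOn l Ω hx.1 g hx.2) r
      ((volume.restrict (openCube (0 : Rn n) s)).prod (volume.restrict Q))

/-- `Δ̄^l_r(s)g(x)`. -/
def barDelta (n l : ℕ) (r : ℝ≥0∞) (s : ℝ) (g : Rn n → ℝ) (x : Rn n) : ℝ≥0∞ :=
  ENNReal.ofReal s ^ (-(n : ℝ) / r.toReal) *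
    eLpNorm (fun h : Rn n => diffl l h g x) r (volume.restrict (openCube (0 : Rn n) s))

/-- Membership in `L_r^{loc}(ℝⁿ)`. -/
def MemLrLoc (n : ℕ) (r : ℝ≥0∞) (φ : Rn n → ℝ) : Prop :=
  Measurable φ ∧ ∀ K : Set (Rn n), IsCompact K → eLpNorm φ r (volume.restrict K) < ∞

def IsWeight {n : ℕ} (w : Rn n → ℝ) : Prop := Measurable w ∧ ∀ x, 0 < w x

/-- A `p`-admissible weight sequence. -/
def pAdmissible (n : ℕ) (p : ℝ≥0∞) (t : ℕ → Rn n → ℝ) : Prop :=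
  ∀ k, IsWeight (t k) ∧ MemLrLoc n p (t k)

/-- The multiple sequence `t_{k,m} = ‖t_k‖_{L_p(Q^n_{k,m})}` associated with a weight sequence. -/
def tkm (n : ℕ) (p : ℝ≥0∞) (t : ℕ → Rn n → ℝ) (k : ℕ) (m : Fin n → ℤ) : ℝ≥0∞ :=
  eLpNorm (t k) p (volume.restrict (dyadicCube n k m))

/-- The weight `t̄_k` built from a multiple sequence `T`. -/
def tbarOf (n : ℕ) (p : ℝ≥0∞) (T : ℕ → (Fin n → ℤ) → ℝ≥0∞) (k : ℕ) (x : Rn n) : ℝ≥0∞ :=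
  (2 : ℝ≥0∞) ^ (((k * n : ℕ) : ℝ) / p.toReal) *
    ∑' m : Fin n → ℤ, (dyadicCubeHalf n k m).indicator (fun _ => T k m) x

/-- `(2^{kn} ∫_Q f^e)^{1/e}`, with the essential supremum modification for `e = ∞`. -/
def avgNorm (n k : ℕ) (e : ℝ≥0∞) (Q : Set (Rn n)) (f : Rn n → ℝ≥0∞) : ℝ≥0∞ :=
  if e = ∞ then essSup f (volume.restrict Q)
  else ((2 : ℝ≥0∞) ^ (k * n) * ∫⁻ x in Q, f x ^ e.toReal) ^ (1 / e.toReal)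

/-- Conditions (2.14)–(2.16) of the class `X^{α₃}_{α,σ,p}`, expressed for a multiple
sequence `T`. -/
def MemXseq (n : ℕ) (α₁ α₂ α₃ : ℝ) (σ₁ σ₂ p : ℝ≥0∞) (T : ℕ → (Fin n → ℤ) → ℝ≥0∞) : Prop :=
  (∃ C₁ : ℝ≥0∞, 0 < C₁ ∧ C₁ < ∞ ∧ ∀ k j : ℕ, k ≤ j → ∀ m : Fin n → ℤ,
    avgNorm n k p (dyadicCube n k m) (tbarOf n p T k) *
      avgNorm n k σ₁ (dyadicCube n k m) (fun x => (tbarOf n p T j x)⁻¹) ≤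
      C₁ * (2 : ℝ≥0∞) ^ (α₁ * ((k : ℝ) - (j : ℝ)))) ∧
  (∃ C₂ : ℝ≥0∞, 0 < C₂ ∧ C₂ < ∞ ∧ ∀ k j : ℕ, k ≤ j → ∀ m : Fin n → ℤ,
    (avgNorm n k p (dyadicCube n k m) (tbarOf n p T k))⁻¹ *
      avgNorm n k σ₂ (dyadicCube n k m) (tbarOf n p T j) ≤
      C₂ * (2 : ℝ≥0∞) ^ (α₂ * ((j : ℝ) - (k : ℝ)))) ∧
  (∀ k : ℕ, ∀ m m' : Fin n → ℤ, (∀ i, |m i - m' i| ≤ 1) →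
    0 < T k m ∧ T k m ≤ (2 : ℝ≥0∞) ^ (α₃ : ℝ) * T k m')

/-- The weighted class `X^{α₃}_{α,σ,p}` of weight sequences. -/
def MemX (n : ℕ) (α₁ α₂ α₃ : ℝ) (σ₁ σ₂ p : ℝ≥0∞) (t : ℕ → Rn n → ℝ) : Prop :=
  pAdmissible n p t ∧ MemXseq n α₁ α₂ α₃ σ₁ σ₂ p (tkm n p t)

/-- Quasinorm of `B̃^l_{p,q,r}(ℝⁿ, T)` with an `ℝ≥0∞`-valued weight sequence `T`. -/
def tildeBnormE (n l : ℕ) (p q r : ℝ≥0∞) (T : ℕ → Rn n → ℝ≥0∞) (φ : Rn n → ℝ) : ℝ≥0∞ :=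
  lqNorm q (fun k : ℕ =>
    lpNormE p volume (fun x =>
      T (k + 1) x *
        deltaE n l r ((2 : ℝ) ^ (1 - ((k : ℤ) + 1))) (openCube x ((2 : ℝ) ^ (-((k : ℤ) + 1)))) φ)) +
  lpNormE p volume (fun x => T 0 x * eLpNorm φ r (volume.restrict (openCube x 1)))

/-- Quasinorm of `B̃^l_{p,q,r}(ℝⁿ, {t_k})`. -/
def tildeBnorm (n l : ℕ) (p q r : ℝ≥0∞) (t : ℕ → Rn n → ℝ) (φ : Rn n → ℝ) : ℝ≥0∞ :=
  tildeBnormE n l p q r (fun k x => ENNReal.ofReal (t k x)) φ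

/-- Membership in `B̃^l_{p,q,r}(ℝⁿ, {t_k})`. -/
def MemTildeB (n l : ℕ) (p q r : ℝ≥0∞) (t : ℕ → Rn n → ℝ) (φ : Rn n → ℝ) : Prop :=
  MemLrLoc n r φ ∧ tildeBnorm n l p q r t φ < ∞

/-- Quasinorm of `B̄^l_{p,q,r}(ℝⁿ, {t_k})`. -/
def barBnorm (n l : ℕ) (p q r : ℝ≥0∞) (t : ℕ → Rn n → ℝ) (φ : Rn n → ℝ) : ℝ≥0∞ :=
  lqNorm q (fun k : ℕ =>
    lpNormE p volume (fun x =>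
      ENNReal.ofReal (t (k + 1) x) * barDelta n l r ((2 : ℝ) ^ (-((k : ℤ) + 1))) φ x)) +
  lpNormE p volume (fun x => ENNReal.ofReal (t 0 x) * eLpNorm φ r (volume.restrict (openCube x 1)))

/-- Membership in `B̄^l_{p,q,r}(ℝⁿ, {t_k})`. -/
def MemBarB (n l : ℕ) (p q r : ℝ≥0∞) (t : ℕ → Rn n → ℝ) (φ : Rn n → ℝ) : Prop :=
  MemLrLoc n r φ ∧ barBnorm n l p q r t φ < ∞

/-- The class `A^{loc}_∞`. -/
def MemAlocInfty (n : ℕ) (w : Rn n → ℝ) : Prop :=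
  ∃ α : ℝ, α ∈ Set.Ioo (0 : ℝ) 1 ∧ ∃ M : ℝ≥0∞, M < ∞ ∧
    ∀ (c : Rn n) (s : ℝ), 0 < s → s ≤ 1 →
      ∀ F : Set (Rn n), F ⊆ cubeAt c s → MeasurableSet F →
        ENNReal.ofReal α * volume (cubeAt c s) ≤ volume F →
        (∫⁻ x in cubeAt c s, ENNReal.ofReal (w x)) ≤ M * ∫⁻ x in F, ENNReal.ofReal (w x)

/-- The class `A^{loc}_1`. -/
def MemAloc1 (n : ℕ) (w : Rn n → ℝ) : Prop :=
  ∃ C : ℝ≥0∞, C < ∞ ∧ ∀ (c : Rn n) (s : ℝ), 0 < s → s ≤ 1 →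
    ∀ᵐ x ∂volume.restrict (cubeAt c s),
      (∫⁻ y in cubeAt c s, ENNReal.ofReal (w y)) ≤ C * volume (cubeAt c s) * ENNReal.ofReal (w x)

/-- The class `A^{loc}_{p₀}` for `p₀ > 1`. -/
def MemAlocGt (n : ℕ) (p₀ : ℝ) (w : Rn n → ℝ) : Prop :=
  ∃ C : ℝ≥0∞, C < ∞ ∧ ∀ (c : Rn n) (s : ℝ), 0 < s → s ≤ 1 →
    ((volume (cubeAt c s))⁻¹ * ∫⁻ y in cubeAt c s, ENNReal.ofReal (w y)) *
      ((volume (cubeAt c s))⁻¹ *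
        ∫⁻ y in cubeAt c s, ENNReal.ofReal (w y) ^ (-(1 : ℝ) / (p₀ - 1))) ^ (p₀ - 1) ≤ C

/-- The class `A^{loc}_{p₀}` for `p₀ ∈ [1,∞)`. -/
def MemAlocP (n : ℕ) (p₀ : ℝ) (w : Rn n → ℝ) : Prop :=
  if p₀ = 1 then MemAloc1 n w else MemAlocGt n p₀ w

/-- The class `{}^{loc}Y^{α₃}_{α₁,α₂}` of weight sequences of variable smoothness. -/
def MemLocY (n : ℕ) (α₁ α₂ α₃ : ℝ) (s : ℕ → Rn n → ℝ) : Prop :=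
  (∀ k, IsWeight (s k)) ∧
  (∃ C : ℝ, 0 < C ∧ ∀ j k : ℕ, j ≤ k → ∀ x : Rn n,
    C⁻¹ * (2 : ℝ) ^ (α₁ * ((k : ℝ) - (j : ℝ))) ≤ s k x / s j x ∧
      s k x / s j x ≤ C * (2 : ℝ) ^ (α₂ * ((k : ℝ) - (j : ℝ)))) ∧
  (∀ k : ℕ, ∀ x y : Rn n, euclNorm (x - y) ≤ (2 : ℝ) ^ (-(k : ℤ)) →
    s k x ≤ (2 : ℝ) ^ α₃ * s k y)

/-- The set `Ξ^{d,n}_{k,m} = Q^n_{k,m} × (2^{-k}B^d ∖ 2^{-k-1}B^d) ⊂ ℝ^{n+d}`. -/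
def Xi (n d k : ℕ) (m : Fin n → ℤ) : Set (Rn (n + d)) :=
  {z | (fun i => z (Fin.castAdd d i)) ∈ dyadicCube n k m ∧
       euclNorm (fun i : Fin d => z (Fin.natAdd n i)) < (2 : ℝ) ^ (-(k : ℤ)) ∧
       (2 : ℝ) ^ (-(k : ℤ) - 1) ≤ euclNorm (fun i : Fin d => z (Fin.natAdd n i))}

/-- The multiple sequence `γ̂_{k,m} = ‖γ‖_{L_p(Ξ^{d,n}_{k,m})}` generated by a weight `γ`. -/
def gammaHat (n d : ℕ) (p : ℝ≥0∞) (γ : Rn (n + d) → ℝ) (k : ℕ) (m : Fin n → ℤ) : ℝ≥0∞ :=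
  eLpNorm γ p (volume.restrict (Xi n d k m))

def delta1Good (n d : ℕ) (p : ℝ≥0∞) (γ : Rn (n + d) → ℝ) (δ : ℝ) : Prop :=
  ∃ C : ℝ≥0∞, C < ∞ ∧ ∀ k j : ℕ, k ≤ j → ∀ m : Fin n → ℤ,
    (∑' m' : {m' : Fin n → ℤ // dyadicCube n j m' ⊆ dyadicCube n k m},
        gammaHat n d p γ j m'.1 ^ p.toReal) ≤
      C * (2 : ℝ≥0∞) ^ ((((k : ℝ) - (j : ℝ)) * (d : ℝ)) * δ) * gammaHat n d p γ k m ^ p.toReal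

/-- `δ₁(γ,n,d)`. -/
def delta1 (n d : ℕ) (p : ℝ≥0∞) (γ : Rn (n + d) → ℝ) : ℝ :=
  sSup {δ : ℝ | 0 < δ ∧ delta1Good n d p γ δ}

def delta2Good (n d : ℕ) (p : ℝ≥0∞) (γ : Rn (n + d) → ℝ) (δ : ℝ) : Prop :=
  ∃ C : ℝ≥0∞, C < ∞ ∧ ∀ k j : ℕ, k ≤ j → ∀ m : Fin n → ℤ,
    ∀ G : Set (Fin n → ℤ), (∀ m' ∈ G, dyadicCube n j m' ⊆ dyadicCube n k m) →
      (∑' m' : G, gammaHat n d p γ j m'.1 ^ p.toReal) ≤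
        C * (volume (⋃ m' ∈ G, dyadicCube n j m') / volume (dyadicCube n k m)) ^ δ *
          ∑' m' : {m' : Fin n → ℤ // dyadicCube n j m' ⊆ dyadicCube n k m},
            gammaHat n d p γ j m'.1 ^ p.toReal

/-- `δ₂(γ,n,d)`. -/
def delta2 (n d : ℕ) (p : ℝ≥0∞) (γ : Rn (n + d) → ℝ) : ℝ :=
  sSup {δ : ℝ | 0 < δ ∧ delta2Good n d p γ δ}

/-- The cardinal B-spline of degree `deg` with knots `0, 1, …, deg + 1`. -/
def cardB : ℕ → ℝ → ℝ
  | 0, x => if 0 ≤ x ∧ x < 1 then 1 else 0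
  | (d + 1), x => (x / (d + 1)) * cardB d x + (((d : ℝ) + 2 - x) / (d + 1)) * cardB d (x - 1)

/-- The tensor-product B-spline `N^{deg}_{k,m}` on `ℝⁿ`. -/
def Bspl (n deg k : ℕ) (m : Fin n → ℤ) (x : Rn n) : ℝ :=
  ∏ i, cardB deg (2 ^ k * x i - (m i : ℝ))

/-- The spline `Σ_m β_m N^{deg}_{k,m}`. -/
def splineSum (n deg k : ℕ) (β : (Fin n → ℤ) → ℝ) (x : Rn n) : ℝ :=
  ∑' m, β m * Bspl n deg k m x

/-- A dyadic spline of degree `deg` (an element of `Σ^{deg} = ⋃_k Σ^{deg}_k`). -/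
def IsSplineFn (n deg : ℕ) (S : Rn n → ℝ) : Prop :=
  ∃ (k : ℕ) (β : (Fin n → ℤ) → ℝ), S = splineSum n deg k β

/-- The weighted best spline approximation `s_k(φ)` by splines of degree `deg`. -/
def sApprox (n deg : ℕ) (p r : ℝ≥0∞) (T : ℕ → (Fin n → ℤ) → ℝ≥0∞) (φ : Rn n → ℝ) (k : ℕ) :
    ℝ≥0∞ :=
  ⨅ β : (Fin n → ℤ) → ℝ,
    lqNorm p (fun m => T k m *
      eLpNorm (fun x => φ x - splineSum n deg k β x) r (volume.restrict (dyadicCube n k m)))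

/-- `s_j(φ)` for `j ∈ {-1, 0, 1, 2, …}`, including the term `s_{-1}`. -/
def sApproxZ (n deg : ℕ) (p r : ℝ≥0∞) (T : ℕ → (Fin n → ℤ) → ℝ≥0∞) (φ : Rn n → ℝ) (j : ℤ) :
    ℝ≥0∞ :=
  if j < 0 then
    lqNorm p (fun m => T 0 m * eLpNorm φ r (volume.restrict (dyadicCube n 0 m)))
  else sApprox n deg p r T φ j.toNat

/-- Local best polynomial approximation `E_l(φ,Q)_r` by polynomials of total degree `< l`. -/
def bestApproxE (n l : ℕ) (r : ℝ≥0∞) (φ : Rn n → ℝ) (Q : Set (Rn n)) : ℝ≥0∞ :=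
  ⨅ P : {P : MvPolynomial (Fin n) ℝ // P.totalDegree < l},
    eLpNorm (fun x => φ x - MvPolynomial.eval x P.1) r (volume.restrict Q)

/-- The modulus of continuity `ω_l(φ,Q)_r`. -/
def modulusE (n l : ℕ) (r : ℝ≥0∞) (φ : Rn n → ℝ) (Q : Set (Rn n)) : ℝ≥0∞ :=
  ⨆ h : Rn n, eLpNorm (difflOn l Q h φ) r (volume : Measure (Rn n))

def partialDeriv {N : ℕ} (i : Fin N) (ψ : Rn N → ℝ) : Rn N → ℝ :=
  fun x => fderiv ℝ ψ x (Pi.single i 1)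

def iterPD {N : ℕ} : List (Fin N) → (Rn N → ℝ) → Rn N → ℝ
  | [], ψ => ψ
  | i :: L, ψ => partialDeriv i (iterPD L ψ)

def multiIdxList {N : ℕ} (α : Fin N → ℕ) : List (Fin N) :=
  (List.finRange N).foldr (fun i L => List.replicate (α i) i ++ L) []

/-- Iterated partial derivative `D^α`. -/
def multiDeriv {N : ℕ} (α : Fin N → ℕ) (ψ : Rn N → ℝ) : Rn N → ℝ :=
  iterPD (multiIdxList α) ψ

/-- `g` is the weak (Sobolev) derivative `D^α f`. -/
def IsWeakDeriv {N : ℕ} (α : Fin N → ℕ) (f g : Rn N → ℝ) : Prop :=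
  ∀ ψ : Rn N → ℝ, ContDiff ℝ (⊤ : ℕ∞) ψ → HasCompactSupport ψ →
    ∫ x, f x * multiDeriv α ψ x = (-1 : ℝ) ^ (∑ i, α i) * ∫ x, g x * ψ x

/-- The weighted Sobolev norm `Σ_{|α| ≤ l} ‖γ · D^α f‖_{L_p}` computed from a system `D` of
weak derivatives. -/
def sobNorm (N : ℕ) (p : ℝ≥0∞) (l : ℕ) (γ : Rn N → ℝ) (D : (Fin N → ℕ) → Rn N → ℝ) : ℝ≥0∞ :=
  ∑' α : Fin N → ℕ,
    if (∑ i, α i) ≤ l then eLpNorm (fun x => γ x * D α x) p volume else 0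

/-- Membership in the weighted Sobolev space `W^l_p(ℝ^N, γ)`, witnessed by the system `D`
of weak derivatives of `f`. -/
def MemW (N : ℕ) (p : ℝ≥0∞) (l : ℕ) (γ : Rn N → ℝ) (f : Rn N → ℝ)
    (D : (Fin N → ℕ) → Rn N → ℝ) : Prop :=
  MeasureTheory.LocallyIntegrable f volume ∧ D 0 = f ∧
    (∀ α : Fin N → ℕ, (∑ i, α i) ≤ l →
      MeasureTheory.LocallyIntegrable (D α) volume ∧ IsWeakDeriv α f (D α)) ∧
    sobNorm N p l γ D < ∞

/-- `φ` is the trace of `f` on the plane `y = 0`. -/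
def IsTraceSob {n d : ℕ} (f : Rn (n + d) → ℝ) (φ : Rn n → ℝ) : Prop :=
  ∃ f' : Rn (n + d) → ℝ, f' =ᵐ[volume] f ∧
    ∀ (c : Rn n) (s : ℝ), 0 < s →
      Filter.Tendsto (fun y : Rn d => ∫ x in cubeAt c s, |f' (Fin.append x y) - φ x|)
        (nhds 0) (nhds 0)

/-- The weight sequence `γ_k(x) = 2^{k(l+n/p)} Σ_m χ_{Q̃^n_{k,m}}(x) γ̂_{k,m}`. -/
def gammaSeq (n d : ℕ) (p : ℝ≥0∞) (l : ℕ) (γ : Rn (n + d) → ℝ) (k : ℕ) (x : Rn n) : ℝ≥0∞ :=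
  (2 : ℝ≥0∞) ^ ((k : ℝ) * ((l : ℝ) + (n : ℝ) / p.toReal)) *
    ∑' m : Fin n → ℤ, (dyadicCubeHalf n k m).indicator (fun _ => gammaHat n d p γ k m) x

/-- Conjugate exponent in `ℝ≥0∞`. -/
def conjE (e : ℝ≥0∞) : ℝ≥0∞ := (1 - e⁻¹)⁻¹

/-- The exponent `p_θ`. -/
def pTheta (p θ : ℝ≥0∞) : ℝ≥0∞ := if θ = ∞ ∧ p = ∞ then 1 else p / θ

/-!
The quasi-norm of `B̃^l_{p,q,r}` is obtained from the local quasi-norms `‖·‖_{L_r(Q)}` and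
`δ^l_r(Q)` by multiplying with weights, taking `L_p` and `ℓ_q` norms of families, and adding. All
these operations preserve both the quasi-triangle inequality and the Fatou property
`N(lim f_k) ≤ liminf N(f_k)` along almost everywhere convergent sequences. Moreover, a quasi-norm
`N` with the Fatou property that locally dominates `L_r` is complete: a rapidly Cauchy subsequence
converges almost everywhere by Borel–Cantelli, and the Fatou property applied to
`φ_j - φ_{u(k)}` as `k → ∞` shows that the pointwise limit is a limit in `N`. The local domination
only uses the last summand of the quasi-norm, since `x + I^n` contains the cube `y + I^n / 2`
whenever `x ∈ y + I^n / 2`.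
-/

open Topology

section Liminf

variable {ι : Type*} {F : Filter ι}

lemma liminf_add_liminf_le_liminf_add (u v : ι → ℝ≥0∞) :
    liminf u F + liminf v F ≤ liminf (fun i => u i + v i) F := by
  have (w : ι → ℝ≥0∞) : Nonempty {a | ∀ᶠ i in F, a ≤ w i} := ⟨0, by simp⟩
  rw [liminf_eq, liminf_eq, sSup_eq_iSup', sSup_eq_iSup']
  refine ENNReal.iSup_add_iSup_le fun a b => le_liminf_of_le (h := ?_)
  filter_upwards [a.2, b.2] with i ha hb using add_le_add ha hb

lemma const_mul_liminf_le [NeBot F] (c : ℝ≥0∞) (u : ι → ℝ≥0∞) :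
    c * liminf u F ≤ liminf (fun i => c * u i) F := by
  have := ENNReal.le_liminf_mul (f := F) (u := fun _ => c) (v := u)
  rwa [liminf_const] at this

end Liminf

section LpNorm

variable {α : Type*} [MeasurableSpace α] {μ : Measure α} {p : ℝ≥0∞}

lemma lpNormE_eq_eLpNorm (hp : p ≠ 0) (f : α → ℝ≥0∞) : lpNormE p μ f = eLpNorm f p μ := by
  unfold lpNormE
  split_ifs with h
  · simp [h, eLpNormEssSup]
  · simp [eLpNorm_eq_lintegral_rpow_enorm_toReal hp h]

lemma lqNorm_eq_eLpNorm_count {ι : Type*} [MeasurableSpace ι] [MeasurableSingletonClass ι]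
    (hp : p ≠ 0) (c : ι → ℝ≥0∞) : lqNorm p c = eLpNorm c p Measure.count := by
  rw [← lpNormE_eq_eLpNorm hp]
  simp only [lqNorm, lpNormE, essSup_count, lintegral_count]

lemma eLpNorm_liminf_le {f : ℕ → α → ℝ≥0∞} (hf : ∀ k, AEMeasurable (f k) μ) :
    eLpNorm (fun x => liminf (fun k => f k x) atTop) p μ ≤
      liminf (fun k => eLpNorm (f k) p μ) atTop := by
  rcases eq_or_ne p 0 with rfl | hp
  · simp
  simp only [← lpNormE_eq_eLpNorm hp, lpNormE]
  split_ifs with h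
  · exact ENNReal.essSup_liminf_le f
  have rpow_liminf (y : ℝ) (hy : 0 < y) (u : ℕ → ℝ≥0∞) :
      liminf u atTop ^ y = liminf (fun k => u k ^ y) atTop :=
    (ENNReal.orderIsoRpow y hy).liminf_apply
  have hp' := ENNReal.toReal_pos hp h
  rw [← rpow_liminf _ (one_div_pos.2 hp')]
  simp only [rpow_liminf _ hp']
  gcongr
  exact lintegral_liminf_le' fun k => (hf k).pow_const _

lemma eLpNorm_mul_const {f : α → ℝ≥0∞} (hf : AEMeasurable f μ) (c : ℝ≥0∞) :
    eLpNorm (fun x => f x * c) p μ = eLpNorm f p μ * c := by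
  rcases eq_or_ne p 0 with rfl | hp
  · simp
  simp only [← lpNormE_eq_eLpNorm hp, lpNormE]
  split_ifs with h
  · simp only [mul_comm _ c, ENNReal.essSup_const_mul]
  have hp' := ENNReal.toReal_pos hp h
  simp only [ENNReal.mul_rpow_of_nonneg _ _ hp'.le]
  rw [lintegral_mul_const'' _ (hf.pow_const _),
    ENNReal.mul_rpow_of_nonneg _ _ (one_div_pos.2 hp').le, ← ENNReal.rpow_mul,
    mul_one_div_cancel hp'.ne', ENNReal.rpow_one]

lemma eLpNorm_ne_zero_of_ae_pos [NeZero μ] {f : α → ℝ≥0∞} (hp : p ≠ 0) (hf : AEMeasurable f μ)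
    (hf_pos : ∀ᵐ x ∂μ, 0 < f x) : eLpNorm f p μ ≠ 0 := by
  intro h
  rw [eLpNorm_eq_zero_iff hf.aestronglyMeasurable hp] at h
  obtain ⟨x, hx, hx_pos⟩ := (h.and hf_pos).exists
  exact hx_pos.ne' hx

lemma eLpNorm_add_measure_lt_top {ε : Type*} [ENorm ε] {f : α → ε} {ν : Measure α}
    (hμ : eLpNorm f p μ < ∞) (hν : eLpNorm f p ν < ∞) : eLpNorm f p (μ + ν) < ∞ := by
  rcases eq_or_ne p 0 with rfl | hp
  · simp
  rcases eq_or_ne p ∞ with rfl | hp_top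
  · rw [eLpNorm_exponent_top] at hμ hν ⊢
    refine (essSup_le_of_ae_le (max (eLpNormEssSup f μ) (eLpNormEssSup f ν)) ?_).trans_lt
      (max_lt hμ hν)
    exact ae_add_measure_iff.2
      ⟨(enorm_ae_le_eLpNormEssSup f μ).mono fun _ h => h.trans (le_max_left _ _),
        (enorm_ae_le_eLpNormEssSup f ν).mono fun _ h => h.trans (le_max_right _ _)⟩
  · rw [eLpNorm_lt_top_iff_lintegral_rpow_enorm_lt_top hp hp_top] at hμ hν ⊢
    rw [lintegral_add_measure]
    exact ENNReal.add_lt_top.2 ⟨hμ, hν⟩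

end LpNorm

section ParametricLpNorm

variable {X β : Type*} [MeasurableSpace X] [MeasurableSpace β] {ν : Measure β} [SFinite ν]

lemma measurable_essSup_prod_right {f : X → β → ℝ≥0∞} (hf : Measurable (Function.uncurry f)) :
    Measurable fun x => essSup (f x) ν := by
  refine measurable_of_Ioi fun a => ?_
  have lt_essSup_iff (x : X) : a < essSup (f x) ν ↔ 0 < ν {y | a < f x y} := by
    rw [← not_le, pos_iff_ne_zero, not_iff_not]
    calc essSup (f x) ν ≤ a ↔ ∀ᵐ y ∂ν, f x y ≤ a :=
          ⟨fun h => (ENNReal.ae_le_essSup (f x)).mono fun _ hy => hy.trans h,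
            essSup_le_of_ae_le a⟩
      _ ↔ ν {y | a < f x y} = 0 := by simp only [ae_iff, not_le]
  have hset : MeasurableSet {z : X × β | a < f z.1 z.2} := measurableSet_lt measurable_const hf
  have hpre : (fun x => essSup (f x) ν) ⁻¹' Set.Ioi a = {x | 0 < ν {y | a < f x y}} :=
    Set.ext lt_essSup_iff
  rw [hpre]
  exact measurableSet_lt measurable_const (measurable_measure_prodMk_left hset)

lemma measurable_eLpNorm_prod_right {E : Type*} [MeasurableSpace E] [TopologicalSpace E]
    [ContinuousENorm E] [OpensMeasurableSpace E] {f : X → β → E} {p : ℝ≥0∞}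
    (hf : Measurable (Function.uncurry f)) : Measurable fun x => eLpNorm (f x) p ν := by
  rcases eq_or_ne p 0 with rfl | hp
  · simp
  rcases eq_or_ne p ∞ with rfl | hp_top
  · simp only [eLpNorm_exponent_top]
    exact measurable_essSup_prod_right (f := fun x y => ‖f x y‖ₑ) hf.enorm
  · simp only [eLpNorm_eq_lintegral_rpow_enorm_toReal hp hp_top]
    have : Measurable fun z : X × β => ‖f z.1 z.2‖ₑ ^ p.toReal := hf.enorm.pow_const _
    exact this.lintegral_prod_right'.pow_const _

lemma measurable_eLpNorm_restrict {E : Type*} [MeasurableSpace E] [NormedAddCommGroup E]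
    [OpensMeasurableSpace E] {f : β → E} {p : ℝ≥0∞} (hf : Measurable f)
    {S : X → Set β} (hS : MeasurableSet {z : X × β | z.2 ∈ S z.1}) :
    Measurable fun x => eLpNorm f p (ν.restrict (S x)) := by
  have hSx (x : X) : MeasurableSet (S x) := measurable_prodMk_left (x := x) hS
  simp only [← eLpNorm_indicator_eq_eLpNorm_restrict (hSx _)]
  exact measurable_eLpNorm_prod_right (f := fun x => (S x).indicator f)
    ((hf.comp measurable_snd).indicator hS)

end ParametricLpNorm

section RapidlyCauchy

variable {α E : Type*} [MeasurableSpace α] {μ : Measure α} [NormedAddCommGroup E] {r D : ℝ≥0∞}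

lemma ae_eventually_enorm_le_geometric_two {g : ℕ → α → E} (hr : r ≠ 0)
    (hg : ∀ k, AEStronglyMeasurable (g k) μ) (hD : D ≠ ∞)
    (h : ∀ k, eLpNorm (g k) r μ ≤ D * 4⁻¹ ^ k) :
    ∀ᵐ x ∂μ, ∀ᶠ k in atTop, ‖g k x‖ₑ ≤ 2⁻¹ ^ k := by
  have four_inv_pow (k : ℕ) : (4⁻¹ : ℝ≥0∞) ^ k = 2⁻¹ ^ k * 2⁻¹ ^ k := by
    rw [← mul_pow, ← ENNReal.mul_inv (by simp) (by simp)]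
    norm_num
  rcases eq_or_ne r ∞ with rfl | hr_top
  · have htend : Tendsto (fun k => D * (2⁻¹ : ℝ≥0∞) ^ k) atTop (𝓝 (D * 0)) :=
      ENNReal.Tendsto.const_mul (ENNReal.tendsto_pow_atTop_nhds_zero_of_lt_one (by simp))
        (Or.inr hD)
    rw [mul_zero] at htend
    filter_upwards [ae_all_iff.2 fun k => enorm_ae_le_eLpNormEssSup (g k) μ] with x hx
    filter_upwards [htend.eventually_le_const one_pos] with k hk
    calc ‖g k x‖ₑ ≤ D * 4⁻¹ ^ k := (hx k).trans (eLpNorm_exponent_top (f := g k) ▸ h k)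
      _ = D * 2⁻¹ ^ k * 2⁻¹ ^ k := by rw [four_inv_pow, mul_assoc]
      _ ≤ 2⁻¹ ^ k := mul_le_of_le_one_left' hk
  · have hr' := ENNReal.toReal_pos hr hr_top
    have markov (k : ℕ) :
        μ {x | 2⁻¹ ^ k ≤ ‖g k x‖ₑ} ≤ D ^ r.toReal * (2⁻¹ ^ r.toReal) ^ k := by
      have hne : (2⁻¹ : ℝ≥0∞) ^ k ≠ 0 := pow_ne_zero _ (by simp)
      have hne_top : (2⁻¹ : ℝ≥0∞) ^ k ≠ ∞ := ENNReal.pow_ne_top (by simp)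
      calc μ {x | 2⁻¹ ^ k ≤ ‖g k x‖ₑ}
          ≤ ((2⁻¹ ^ k)⁻¹) ^ r.toReal * eLpNorm (g k) r μ ^ r.toReal :=
            meas_ge_le_mul_pow_eLpNorm_enorm μ hr hr_top (hg k) hne fun h => absurd h hne_top
        _ ≤ ((2⁻¹ ^ k)⁻¹) ^ r.toReal * (D * 4⁻¹ ^ k) ^ r.toReal := by gcongr; exact h k
        _ = (D * 2⁻¹ ^ k) ^ r.toReal := by
            rw [← ENNReal.mul_rpow_of_nonneg _ _ hr'.le, four_inv_pow, mul_left_comm,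
              ENNReal.inv_mul_cancel_left hne hne_top]
        _ = D ^ r.toReal * (2⁻¹ ^ r.toReal) ^ k := by
            rw [ENNReal.mul_rpow_of_nonneg _ _ hr'.le, ← ENNReal.rpow_natCast_mul,
              mul_comm (k : ℝ), ENNReal.rpow_mul_natCast]
    have hsum : ∑' k, μ {x | 2⁻¹ ^ k ≤ ‖g k x‖ₑ} ≠ ∞ := by
      refine ne_top_of_le_ne_top ?_ (ENNReal.tsum_le_tsum markov)
      rw [ENNReal.tsum_mul_left, ENNReal.tsum_geometric]
      refine ENNReal.mul_ne_top (ENNReal.rpow_ne_top_of_nonneg hr'.le hD)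
        (ENNReal.inv_ne_top.2 (tsub_pos_of_lt ?_).ne')
      exact ENNReal.rpow_lt_one (by simp) hr'
    filter_upwards [ae_eventually_notMem hsum] with x hx
    filter_upwards [hx] with k hk
    exact (not_le.1 hk).le

lemma ae_cauchySeq_of_eLpNorm_sub_le_geometric {f : ℕ → α → E} (hr : r ≠ 0)
    (hf : ∀ k, AEStronglyMeasurable (f k) μ) (hD : D ≠ ∞)
    (h : ∀ k, eLpNorm (f k - f (k + 1)) r μ ≤ D * 4⁻¹ ^ k) :
    ∀ᵐ x ∂μ, CauchySeq fun k => f k x := by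
  filter_upwards [ae_eventually_enorm_le_geometric_two hr
    (fun k => (hf k).sub (hf (k + 1))) hD h] with x hx
  obtain ⟨K, hK⟩ := eventually_atTop.1 hx
  refine (cauchySeq_shift K).1 (cauchySeq_of_edist_le_geometric_two 1 (by simp) fun k => ?_)
  calc edist (f (k + K) x) (f (k + 1 + K) x) = ‖(f (k + K) - f (k + K + 1)) x‖ₑ := by
        rw [edist_eq_enorm_sub, add_right_comm, Pi.sub_apply]
    _ ≤ 2⁻¹ ^ (k + K) := hK _ (Nat.le_add_left _ _)
    _ ≤ 2⁻¹ ^ k := pow_le_pow_right_of_le_one' (by simp) (Nat.le_add_right _ _)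
    _ = 1 / 2 ^ k := by rw [one_div, ENNReal.inv_pow]

end RapidlyCauchy

lemma ae_of_forall_exists_nhds_ae_restrict {α : Type*} [MeasurableSpace α] [TopologicalSpace α]
    [SecondCountableTopology α] {μ : Measure α} {P : α → Prop}
    (h : ∀ x, ∃ U ∈ 𝓝 x, ∀ᵐ y ∂μ.restrict U, P y) : ∀ᵐ x ∂μ, P x := by
  refine measure_null_of_locally_null _ fun x _ => ?_
  obtain ⟨U, hU, hPU⟩ := h x
  refine ⟨{y | ¬ P y} ∩ U, inter_mem_nhdsWithin _ hU, le_antisymm ?_ zero_le⟩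
  exact (Measure.le_restrict_apply _ _).trans_eq hPU

/-- The functional `N` locally dominates the `L_r(μ)` quasi-norm; for a quasi-norm this says that
the space it defines embeds continuously into `L_r^{loc}`. -/
def LocallyDominatesLp {α E : Type*} [MeasurableSpace α] [TopologicalSpace α]
    [NormedAddCommGroup E] (r : ℝ≥0∞) (μ : Measure α) (N : (α → E) → ℝ≥0∞) : Prop :=
  ∀ x, ∃ U ∈ 𝓝 x, ∃ D ≠ ∞, ∀ f, eLpNorm f r (μ.restrict U) ≤ D * N f

namespace LocallyDominatesLp

variable {α E : Type*} [MeasurableSpace α] [TopologicalSpace α] [NormedAddCommGroup E]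
  {r : ℝ≥0∞} {μ : Measure α} {N : (α → E) → ℝ≥0∞}

lemma eLpNorm_restrict_lt_top (hN : LocallyDominatesLp r μ N) {f : α → E} (hf : N f < ∞)
    {K : Set α} (hK : IsCompact K) : eLpNorm f r (μ.restrict K) < ∞ := by
  refine hK.induction_on (p := fun s => eLpNorm f r (μ.restrict s) < ∞) (by simp)
    (fun s t hst ht => (eLpNorm_mono_measure f (Measure.restrict_mono_set μ hst)).trans_lt ht)
    (fun s t hs ht => (eLpNorm_mono_measure f (Measure.restrict_union_le s t)).trans_lt
      (eLpNorm_add_measure_lt_top hs ht)) fun x _ => ?_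
  obtain ⟨U, hU, D, hD, hDN⟩ := hN x
  exact ⟨U, mem_nhdsWithin_of_mem_nhds hU, (hDN f).trans_lt (ENNReal.mul_lt_top hD.lt_top hf)⟩

lemma ae_cauchySeq [SecondCountableTopology α] [MeasurableSpace E] [OpensMeasurableSpace E]
    [SecondCountableTopology E] (hN : LocallyDominatesLp r μ N) (hr : r ≠ 0) {φ : ℕ → α → E}
    (hφ : ∀ k, Measurable (φ k)) (h : ∀ k, N (φ k - φ (k + 1)) ≤ 4⁻¹ ^ k) :
    ∀ᵐ x ∂μ, CauchySeq fun k => φ k x := by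
  refine ae_of_forall_exists_nhds_ae_restrict fun x => ?_
  obtain ⟨U, hU, D, hD, hDN⟩ := hN x
  refine ⟨U, hU, ae_cauchySeq_of_eLpNorm_sub_le_geometric hr
    (fun k => (hφ k).aestronglyMeasurable) hD fun k => (hDN _).trans ?_⟩
  gcongr
  exact h k

end LocallyDominatesLp

/-- A functional `N` on functions `α → E` which on measurable functions satisfies the
quasi-triangle inequality with a finite constant `C` and is lower semicontinuous under `μ`-almost
everywhere convergence (the Fatou property). The quasi-triangle inequality is stated for
differences, so that no symmetry of `N` is needed. -/
structure IsFatouQuasinorm {α E : Type*} [MeasurableSpace α] [NormedAddCommGroup E]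
    [MeasurableSpace E] (μ : Measure α) (C : ℝ≥0∞) (N : (α → E) → ℝ≥0∞) : Prop where
  const_ne_top : C ≠ ∞
  sub_le ⦃f g : α → E⦄ : Measurable f → Measurable g → N (f - g) ≤ C * (N f + N g)
  le_liminf ⦃f : ℕ → α → E⦄ ⦃g : α → E⦄ : (∀ k, Measurable (f k)) →
    (∀ᵐ x ∂μ, Tendsto (fun k => f k x) atTop (𝓝 (g x))) →
    N g ≤ liminf (fun k => N (f k)) atTop

lemma isFatouQuasinorm_eLpNorm {α E : Type*} [MeasurableSpace α] [NormedAddCommGroup E]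
    [MeasurableSpace E] [OpensMeasurableSpace E] [SecondCountableTopology E] {μ ν : Measure α}
    (hνμ : ν ≪ μ) (r : ℝ≥0∞) :
    IsFatouQuasinorm μ (LpAddConst r) fun f : α → E => eLpNorm f r ν where
  const_ne_top := (LpAddConst_lt_top r).ne
  sub_le _ _ hf hg := eLpNorm_sub_le' hf.aestronglyMeasurable hg.aestronglyMeasurable r
  le_liminf _ _ hf hfg :=
    Lp.eLpNorm_lim_le_liminf_eLpNorm (fun k => (hf k).aestronglyMeasurable) _ (hνμ.ae_le hfg)

namespace IsFatouQuasinorm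

section Constructions

variable {α E : Type*} [MeasurableSpace α] [NormedAddCommGroup E] [MeasurableSpace E]
  {μ : Measure α} {C C' : ℝ≥0∞} {N N' : (α → E) → ℝ≥0∞}

lemma comp {β F : Type*} [MeasurableSpace β] [NormedAddCommGroup F] [MeasurableSpace F]
    {ν : Measure β} (hN : IsFatouQuasinorm μ C N) {L : (β → F) → α → E}
    (hL_meas : ∀ f, Measurable f → Measurable (L f)) (hL_sub : ∀ f g, L (f - g) = L f - L g)
    (hL_tendsto : ∀ (f : ℕ → β → F) (g : β → F),
      (∀ᵐ y ∂ν, Tendsto (fun k => f k y) atTop (𝓝 (g y))) →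
        ∀ᵐ x ∂μ, Tendsto (fun k => L (f k) x) atTop (𝓝 (L g x))) :
    IsFatouQuasinorm ν C fun f => N (L f) where
  const_ne_top := hN.const_ne_top
  sub_le f g hf hg := by
    rw [hL_sub]
    exact hN.sub_le (hL_meas f hf) (hL_meas g hg)
  le_liminf f g hf hfg := hN.le_liminf (fun k => hL_meas _ (hf k)) (hL_tendsto f g hfg)

lemma const_mul (hN : IsFatouQuasinorm μ C N) (c : ℝ≥0∞) :
    IsFatouQuasinorm μ C fun f => c * N f where
  const_ne_top := hN.const_ne_top
  sub_le f g hf hg := calc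
    c * N (f - g) ≤ c * (C * (N f + N g)) := by gcongr; exact hN.sub_le hf hg
    _ = C * (c * N f + c * N g) := by ring
  le_liminf f g hf hfg :=
    (mul_le_mul_right (hN.le_liminf hf hfg) c).trans (const_mul_liminf_le c _)

lemma add (hN : IsFatouQuasinorm μ C N) (hN' : IsFatouQuasinorm μ C' N') :
    IsFatouQuasinorm μ (max C C') fun f => N f + N' f where
  const_ne_top := (max_lt hN.const_ne_top.lt_top hN'.const_ne_top.lt_top).ne
  sub_le f g hf hg := calc
    N (f - g) + N' (f - g) ≤ C * (N f + N g) + C' * (N' f + N' g) :=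
      add_le_add (hN.sub_le hf hg) (hN'.sub_le hf hg)
    _ ≤ max C C' * (N f + N g) + max C C' * (N' f + N' g) := by
      gcongr
      exacts [le_max_left _ _, le_max_right _ _]
    _ = max C C' * (N f + N' f + (N g + N' g)) := by ring
  le_liminf f g hf hfg :=
    (add_le_add (hN.le_liminf hf hfg) (hN'.le_liminf hf hfg)).trans
      (liminf_add_liminf_le_liminf_add _ _)

lemma eLpNorm {X : Type*} [MeasurableSpace X] {ν : Measure X} {N : X → (α → E) → ℝ≥0∞}
    (hN : ∀ x, IsFatouQuasinorm μ C (N x)) (hC : C ≠ ∞)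
    (hN_meas : ∀ f, Measurable f → AEMeasurable (fun x => N x f) ν) (p : ℝ≥0∞) :
    IsFatouQuasinorm μ (C * LpAddConst p) fun f => eLpNorm (fun x => N x f) p ν where
  const_ne_top := ENNReal.mul_ne_top hC (LpAddConst_lt_top p).ne
  sub_le f g hf hg := by
    lift C to NNReal using hC
    calc MeasureTheory.eLpNorm (fun x => N x (f - g)) p ν
        ≤ C • MeasureTheory.eLpNorm ((fun x => N x f) + fun x => N x g) p ν :=
          eLpNorm_le_nnreal_smul_eLpNorm_of_ae_le_mul'
            (Eventually.of_forall fun x => (hN x).sub_le hf hg) p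
      _ ≤ C • (LpAddConst p * (MeasureTheory.eLpNorm (fun x => N x f) p ν +
            MeasureTheory.eLpNorm (fun x => N x g) p ν)) := by
          gcongr
          exact eLpNorm_add_le' (hN_meas f hf).aestronglyMeasurable
            (hN_meas g hg).aestronglyMeasurable p
      _ = _ := by rw [ENNReal.smul_def, smul_eq_mul, mul_assoc]
  le_liminf f g hf hfg :=
    (eLpNorm_mono_enorm fun x => (hN x).le_liminf hf hfg).trans
      (eLpNorm_liminf_le fun k => hN_meas (f k) (hf k))

end Constructions

section Completeness

variable {α E : Type*} [MeasurableSpace α] [NormedAddCommGroup E] [MeasurableSpace E]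
  {μ : Measure α} {C r : ℝ≥0∞} {N : (α → E) → ℝ≥0∞} {φ : ℕ → α → E} {ψ : α → E}

lemma lt_top_of_sub_lt_top [MeasurableSub₂ E] (hN : IsFatouQuasinorm μ C N) {f : α → E}
    (hf : Measurable f) (hψ : Measurable ψ) (hNf : N f < ∞) (h : N (f - ψ) < ∞) : N ψ < ∞ := calc
  N ψ = N (f - (f - ψ)) := by rw [_root_.sub_sub_cancel]
  _ ≤ C * (N f + N (f - ψ)) := hN.sub_le hf (hf.sub hψ)
  _ < ∞ := ENNReal.mul_lt_top hN.const_ne_top.lt_top (ENNReal.add_lt_top.2 ⟨hNf, h⟩)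

lemma exists_forall_sub_lt_of_tendsto_ae [MeasurableSub₂ E] (hN : IsFatouQuasinorm μ C N)
    (hφ : ∀ k, Measurable (φ k))
    (hCauchy : ∀ ε, 0 < ε → ∃ M, ∀ i ≥ M, ∀ j ≥ M, N (φ i - φ j) < ε)
    {u : ℕ → ℕ} (hu : Tendsto u atTop atTop)
    (hψ : ∀ᵐ x ∂μ, Tendsto (fun k => φ (u k) x) atTop (𝓝 (ψ x))) {ε : ℝ≥0∞} (hε : 0 < ε) :
    ∃ M, ∀ j ≥ M, N (φ j - ψ) < ε := by
  obtain ⟨δ, hδ, hδε⟩ := exists_between hε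
  obtain ⟨M, hM⟩ := hCauchy δ hδ
  refine ⟨M, fun j hj => lt_of_le_of_lt ?_ hδε⟩
  calc N (φ j - ψ) ≤ liminf (fun k => N (φ j - φ (u k))) atTop :=
        hN.le_liminf (fun k => (hφ j).sub (hφ (u k))) (hψ.mono fun x hx => hx.const_sub _)
    _ ≤ δ := liminf_le_of_frequently_le' <| Eventually.frequently <|
        (hu.eventually_ge_atTop M).mono fun k hk => (hM j hj (u k) hk).le

variable [TopologicalSpace α] [SecondCountableTopology α] [SecondCountableTopology E]
  [BorelSpace E] [CompleteSpace E]

theorem exists_limit_of_cauchy (hN : IsFatouQuasinorm μ C N) (hNr : LocallyDominatesLp r μ N)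
    (hr : r ≠ 0) (hφ : ∀ k, Measurable (φ k)) (hφN : ∀ k, N (φ k) < ∞)
    (hCauchy : ∀ ε, 0 < ε → ∃ M, ∀ i ≥ M, ∀ j ≥ M, N (φ i - φ j) < ε) :
    ∃ ψ, Measurable ψ ∧ N ψ < ∞ ∧ ∀ ε, 0 < ε → ∃ M, ∀ j ≥ M, N (φ j - ψ) < ε := by
  obtain ⟨u, hu, hu_rapid⟩ : ∃ u : ℕ → ℕ, StrictMono u ∧
      ∀ k, N (φ (u k) - φ (u (k + 1))) ≤ 4⁻¹ ^ k := by
    obtain ⟨u, hu, hu'⟩ := extraction_forall_of_eventually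
      (P := fun k M => ∀ j ≥ M, N (φ M - φ j) ≤ 4⁻¹ ^ k) fun k => by
        obtain ⟨M, hM⟩ := hCauchy (4⁻¹ ^ k) (ENNReal.pow_pos (by simp) k)
        filter_upwards [eventually_ge_atTop M] with i hi j hj
        exact (hM i hi j (hi.trans hj)).le
    exact ⟨u, hu, fun k => hu' k _ (hu.monotone k.le_succ)⟩
  have hu_cauchy := hNr.ae_cauchySeq hr (fun k => hφ (u k)) hu_rapid
  obtain ⟨ψ, hψ, hψ_lim⟩ := measurable_limit_of_tendsto_metrizable_ae
    (fun k => (hφ (u k)).aemeasurable) (hu_cauchy.mono fun x => cauchySeq_tendsto_of_complete)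
  have hφψ (ε : ℝ≥0∞) : 0 < ε → ∃ M, ∀ j ≥ M, N (φ j - ψ) < ε :=
    hN.exists_forall_sub_lt_of_tendsto_ae hφ hCauchy hu.tendsto_atTop hψ_lim
  obtain ⟨M, hM⟩ := hφψ 1 one_pos
  exact ⟨ψ, hψ, hN.lt_top_of_sub_lt_top (hφ M) hψ (hφN M) ((hM M le_rfl).trans one_lt_top), hφψ⟩

end Completeness

end IsFatouQuasinorm

section Cubes

variable {n : ℕ} {s : ℝ}

lemma openCube_eq_ball (x : Rn n) (hs : 0 < s) : openCube x s = Metric.ball x s := by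
  ext y
  simp [openCube, dist_pi_lt_iff hs, Real.dist_eq]

lemma openCube_subset_openCube {x y : Rn n} {s t : ℝ} (h : x ∈ openCube y s) :
    openCube y t ⊆ openCube x (s + t) := fun z hz i => calc
  |z i - x i| ≤ |x i - y i| + |z i - y i| := by
    rw [add_comm, abs_sub_comm (x i)]
    exact abs_sub_le _ _ _
  _ < s + t := add_lt_add (h i) (hz i)

lemma openCube_mem_nhds (x : Rn n) (hs : 0 < s) : openCube x s ∈ 𝓝 x :=
  openCube_eq_ball x hs ▸ Metric.ball_mem_nhds x hs

lemma measurableSet_openCube_prod (s : ℝ) :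
    MeasurableSet {z : Rn n × Rn n | z.2 ∈ openCube z.1 s} := by
  have : {z : Rn n × Rn n | z.2 ∈ openCube z.1 s} = ⋂ i, {z | |z.2 i - z.1 i| < s} := by
    ext z
    simp [openCube]
  rw [this]
  exact .iInter fun i => measurableSet_lt (by fun_prop) measurable_const

lemma measurableSet_openCube (x : Rn n) (s : ℝ) : MeasurableSet (openCube x s) :=
  measurable_prodMk_left (x := x) (measurableSet_openCube_prod s)

end Cubes

lemma quasiMeasurePreserving_add_comp_fst {X G : Type*} [MeasurableSpace X] [MeasurableSpace G]
    [AddGroup G] [MeasurableAdd₂ G] {μ : Measure X} {ν : Measure G} [SFinite μ] [SFinite ν]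
    [ν.IsAddRightInvariant] {a : X → G} (ha : Measurable a) :
    Measure.QuasiMeasurePreserving (fun z : X × G => z.2 + a z.1) (μ.prod ν) ν := by
  have shear : MeasurePreserving (fun z : X × G => (z.1, z.2 + a z.1)) (μ.prod ν) (μ.prod ν) :=
    (MeasurePreserving.id μ).skew_product (g := fun x y => y + a x) (by fun_prop)
      (Eventually.of_forall fun x => (measurePreserving_add_right ν (a x)).map_eq)
  exact Measure.quasiMeasurePreserving_snd.comp shear.quasiMeasurePreserving

section Differences

variable {n : ℕ} (l : ℕ)

lemma diffl_sub (h : Rn n) (f g : Rn n → ℝ) : diffl l h (f - g) = diffl l h f - diffl l h g := by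
  ext x
  simp only [diffl, Pi.sub_apply, mul_sub, Finset.sum_sub_distrib]

lemma measurable_diffl {g : Rn n → ℝ} (hg : Measurable g) :
    Measurable fun z : Rn n × Rn n => diffl l z.1 g z.2 := by
  unfold diffl
  fun_prop

lemma tendsto_diffl_ae {f : ℕ → Rn n → ℝ} {g : Rn n → ℝ}
    (h : ∀ᵐ x, Tendsto (fun k => f k x) atTop (𝓝 (g x))) :
    ∀ᵐ z : Rn n × Rn n, Tendsto (fun k => diffl l z.1 (f k) z.2) atTop (𝓝 (diffl l z.1 g z.2)) := by
  have h_shift : ∀ᵐ z : Rn n × Rn n, ∀ j : ℕ,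
      Tendsto (fun k => f k (z.2 + (j : ℝ) • z.1)) atTop (𝓝 (g (z.2 + (j : ℝ) • z.1))) :=
    ae_all_iff.2 fun j =>
      (quasiMeasurePreserving_add_comp_fst (measurable_const_smul (j : ℝ))).ae h
  filter_upwards [h_shift] with z hz
  exact tendsto_finsetSum _ fun j _ => (hz j).const_mul _

variable (r : ℝ≥0∞) (s : ℝ)

lemma isFatouQuasinorm_deltaE (Q : Set (Rn n)) :
    IsFatouQuasinorm volume (LpAddConst r) (deltaE n l r s Q) := by
  refine IsFatouQuasinorm.const_mul ?_ _
  refine (isFatouQuasinorm_eLpNorm (μ := (volume : Measure (Rn n × Rn n))) ?_ r).comp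
    (L := fun g z => diffl l z.1 g z.2) (fun g => measurable_diffl l) (fun f g => ?_)
    fun f g => tendsto_diffl_ae l
  · rw [Measure.prod_restrict]
    exact Measure.absolutelyContinuous_of_le Measure.restrict_le_self
  · ext z
    simp only [diffl_sub, Pi.sub_apply]

lemma measurable_deltaE_openCube (s' : ℝ) {g : Rn n → ℝ} (hg : Measurable g) :
    Measurable fun x => deltaE n l r s (openCube x s') g := by
  unfold deltaE
  simp only [Measure.prod_restrict]
  refine (measurable_eLpNorm_restrict (measurable_diffl l hg) ?_).const_mul _
  have hfst : Measurable fun z : Rn n × Rn n × Rn n => z.2.1 := by fun_prop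
  have hsnd : Measurable fun z : Rn n × Rn n × Rn n => (z.1, z.2.2) := by fun_prop
  exact (hfst (measurableSet_openCube 0 s)).inter (hsnd (measurableSet_openCube_prod s'))

end Differences

/-- Membership in `B̃^l_{p,q,r}(ℝⁿ, T)` for an `ℝ≥0∞`-valued weight sequence `T`. -/
def MemTildeBE (n l : ℕ) (p q r : ℝ≥0∞) (T : ℕ → Rn n → ℝ≥0∞) (φ : Rn n → ℝ) : Prop :=
  MemLrLoc n r φ ∧ tildeBnormE n l p q r T φ < ∞

section TildeB

variable {n l : ℕ} {p q r : ℝ≥0∞} {T : ℕ → Rn n → ℝ≥0∞}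

lemma exists_isFatouQuasinorm_tildeBnormE (hp : p ≠ 0) (hq : q ≠ 0)
    (hT : ∀ k, AEMeasurable (T k)) :
    ∃ C, IsFatouQuasinorm volume C (tildeBnormE n l p q r T) := by
  unfold tildeBnormE
  simp only [lqNorm_eq_eLpNorm_count hq, lpNormE_eq_eLpNorm hp]
  have hconst := (LpAddConst_lt_top r).ne
  refine ⟨_, .add (.eLpNorm (fun k => .eLpNorm (fun x =>
    (isFatouQuasinorm_deltaE l r _ _).const_mul _) hconst (fun f hf => ?_) p)
    (ENNReal.mul_ne_top hconst (LpAddConst_lt_top p).ne) (fun f _ => ?_) q)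
    (.eLpNorm (fun x => (isFatouQuasinorm_eLpNorm ?_ r).const_mul _) hconst (fun f hf => ?_) p)⟩
  · exact (hT _).mul (measurable_deltaE_openCube l r _ _ hf).aemeasurable
  · exact Measurable.of_discrete.aemeasurable
  · exact Measure.absolutelyContinuous_of_le Measure.restrict_le_self
  · exact (hT 0).mul (measurable_eLpNorm_restrict hf (measurableSet_openCube_prod 1)).aemeasurable

lemma locallyDominatesLp_tildeBnormE (hp : p ≠ 0) (hT : AEMeasurable (T 0))
    (hT_pos : ∀ᵐ x, 0 < T 0 x) : LocallyDominatesLp r volume (tildeBnormE n l p q r T) := by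
  intro y
  set U := openCube y 2⁻¹
  have hU : U ∈ 𝓝 y := openCube_mem_nhds y (by norm_num)
  set c := eLpNorm (T 0) p (volume.restrict U)
  have : NeZero (volume.restrict U) :=
    ⟨Measure.restrict_eq_zero.not.2 (Measure.measure_pos_of_mem_nhds volume hU).ne'⟩
  have hc : c ≠ 0 := eLpNorm_ne_zero_of_ae_pos hp hT.restrict (ae_restrict_of_ae hT_pos)
  -- `c = ∞` is possible, and then the constant `c⁻¹ = 0` fails when `f` has infinite norm.
  have hc_min : min 1 c ≠ 0 := (lt_min one_pos hc.bot_lt).ne'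
  have hc_min_top : min 1 c ≠ ∞ := ne_top_of_le_ne_top one_ne_top (min_le_left _ _)
  refine ⟨U, hU, (min 1 c)⁻¹, ENNReal.inv_ne_top.2 hc_min, fun f => ?_⟩
  rw [← ENNReal.mul_le_iff_le_inv hc_min hc_min_top]
  calc min 1 c * eLpNorm f r (volume.restrict U)
      ≤ c * eLpNorm f r (volume.restrict U) := by gcongr; exact min_le_right _ _
    _ = eLpNorm (fun x => T 0 x * eLpNorm f r (volume.restrict U)) p (volume.restrict U) :=
      (eLpNorm_mul_const hT.restrict _).symm
    _ ≤ eLpNorm (fun x => T 0 x * eLpNorm f r (volume.restrict (openCube x 1))) p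
          (volume.restrict U) := by
      refine eLpNorm_mono_enorm_ae ?_
      filter_upwards [ae_restrict_mem (measurableSet_openCube y 2⁻¹)] with x hx
      have : U ⊆ openCube x 1 := (openCube_subset_openCube hx).trans_eq (by norm_num)
      simp only [enorm_eq_self]
      gcongr
    _ ≤ eLpNorm (fun x => T 0 x * eLpNorm f r (volume.restrict (openCube x 1))) p volume :=
      eLpNorm_mono_measure _ Measure.restrict_le_self
    _ ≤ tildeBnormE n l p q r T f := by
      rw [← lpNormE_eq_eLpNorm hp]
      exact le_add_self

end TildeB

theorem tildeB_complete_general (n l : ℕ) (p q r : ℝ≥0∞) (hp : p ≠ 0) (hq : q ≠ 0) (hr : r ≠ 0)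
    (T : ℕ → Rn n → ℝ≥0∞) (hT : ∀ k, AEMeasurable (T k)) (hT_pos : ∀ᵐ x, 0 < T 0 x)
    (φ : ℕ → Rn n → ℝ) (hφ : ∀ j, MemTildeBE n l p q r T (φ j))
    (hCauchy : ∀ ε : ℝ≥0∞, 0 < ε → ∃ N : ℕ, ∀ i ≥ N, ∀ j ≥ N,
      tildeBnormE n l p q r T (φ i - φ j) < ε) :
    ∃ ψ : Rn n → ℝ, MemTildeBE n l p q r T ψ ∧
      ∀ ε : ℝ≥0∞, 0 < ε → ∃ N : ℕ, ∀ j ≥ N, tildeBnormE n l p q r T (φ j - ψ) < ε := by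
  obtain ⟨C, hN⟩ := exists_isFatouQuasinorm_tildeBnormE (l := l) (r := r) hp hq hT
  have hNr := locallyDominatesLp_tildeBnormE (l := l) (q := q) (r := r) hp (hT 0) hT_pos
  obtain ⟨ψ, hψ, hψN, hφψ⟩ := hN.exists_limit_of_cauchy hNr hr (fun j => (hφ j).1.1)
    (fun j => (hφ j).2) hCauchy
  exact ⟨ψ, ⟨⟨hψ, fun K => hNr.eLpNorm_restrict_lt_top hψN⟩, hψN⟩, hφψ⟩

/-- **Theorem 2.4: the space `B̃^l_{p,q,r}(ℝⁿ,{t_k})` is complete.** -/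
theorem tildeB_complete (n l : ℕ) (hn : 0 < n) (hl : 0 < l) (p q r : ℝ≥0∞)
    (hp : 0 < p) (hq : 0 < q) (hr : 0 < r) (α₁ α₂ α₃ : ℝ) (hα₃ : 0 ≤ α₃)
    (σ₁ σ₂ : ℝ≥0∞) (hσ₁ : 0 < σ₁) (hσ₂ : 0 < σ₂)
    (t : ℕ → Rn n → ℝ) (ht : MemX n α₁ α₂ α₃ σ₁ σ₂ p t)
    (φ : ℕ → Rn n → ℝ) (hφ : ∀ j, MemTildeB n l p q r t (φ j))
    (hCauchy : ∀ ε : ℝ≥0∞, 0 < ε → ∃ N : ℕ, ∀ i ≥ N, ∀ j ≥ N,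
      tildeBnorm n l p q r t (fun x => φ i x - φ j x) < ε) :
    ∃ ψ : Rn n → ℝ, MemTildeB n l p q r t ψ ∧
      ∀ ε : ℝ≥0∞, 0 < ε → ∃ N : ℕ, ∀ j ≥ N,
        tildeBnorm n l p q r t (fun x => φ j x - ψ x) < ε :=
  tildeB_complete_general n l p q r hp.ne' hq.ne' hr.ne' (fun k x => ENNReal.ofReal (t k x))
    (fun k => (ht.1 k).1.1.ennreal_ofReal.aemeasurable)
    (.of_forall fun x => ENNReal.ofReal_pos.2 ((ht.1 0).1.2 x)) φ hφ hCauchy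

end
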